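/- arXiv:2101.02537 — 4 statements merged into one kernel-verified Lean document; each statement's English description precedes it below -/
import Mathlib

section
/- Let G be a finite simple graph without isolated vertices. Then γ_{t{R2}}(G) = 2γ_t(G) holds if and only if γ_{t{R2}}(G) = γ_{tR}(G) and γ_t(G) = γ(G), where γ_{t{R2}}(G) is the total Roman {2}-domination number, γ_{tR}(G) is the total Roman domination number, γ_t(G) is the total domination number, and γ(G) is the domination number of G. -/
/-!
Write `γt2`, `γtR`, `γt`, `γ` for the four parameters. Four inequalities give the result:

* `γt2 ≤ γtR`, since a total Roman dominating function is a total Roman {2}-dominating function;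
* `γtR ≤ 2 γt`, by assigning `2` to each vertex of a minimum total dominating set;
* `γt2 ≤ γt + γ`, by adding the indicators of a minimum total dominating set and of a minimum
  dominating set;
* `2 γ ≤ γtR`: if `f` is a total Roman dominating function with level sets `V₁`, `V₂`, then `V₂`
  dominates everything except the vertices of `V₁` without a neighbor in `V₂`. Each of these has a
  neighbor in `V₁`, so by an Ore-type argument (`exists_half_dominating`) at most `|V₁| / 2` further
  vertices dominate them.

If `γt2 = 2 γt`, the first two inequalities give `γt2 = γtR`, and the third with `γ ≤ γt` gives
`γt = γ`. Conversely, `2 γt = 2 γ ≤ γtR = γt2 ≤ 2 γt`.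
-/

open Finset
open scoped Classical

variable {V : Type*}

/-- `f` is a total Roman {2}-dominating function on `G`. -/
def IsTR2DF [Fintype V] (G : SimpleGraph V) (f : V → ℕ) : Prop :=
  (∀ v, f v ≤ 2) ∧
  (∀ v, f v = 0 → 2 ≤ ∑ u ∈ Finset.univ.filter (fun u => G.Adj v u), f u) ∧
  (∀ v, 1 ≤ f v → ∃ u, G.Adj v u ∧ 1 ≤ f u)

/-- The total Roman {2}-domination number of `G`. -/
noncomputable def tR2Num [Fintype V] (G : SimpleGraph V) : ℕ :=
  sInf {k | ∃ f : V → ℕ, IsTR2DF G f ∧ (∑ v, f v) = k}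

/-- `f` is a total Roman dominating function on `G`. -/
def IsTRDF [Fintype V] (G : SimpleGraph V) (f : V → ℕ) : Prop :=
  (∀ v, f v ≤ 2) ∧
  (∀ v, f v = 0 → ∃ u, G.Adj v u ∧ f u = 2) ∧
  (∀ v, 1 ≤ f v → ∃ u, G.Adj v u ∧ 1 ≤ f u)

/-- The total Roman domination number of `G`. -/
noncomputable def tRNum [Fintype V] (G : SimpleGraph V) : ℕ :=
  sInf {k | ∃ f : V → ℕ, IsTRDF G f ∧ (∑ v, f v) = k}

/-- `f` is a Roman {2}-dominating function on `G`. -/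
def IsR2DF [Fintype V] (G : SimpleGraph V) (f : V → ℕ) : Prop :=
  (∀ v, f v ≤ 2) ∧
  (∀ v, f v = 0 → 2 ≤ ∑ u ∈ Finset.univ.filter (fun u => G.Adj v u), f u)

/-- The Roman {2}-domination number of `G`. -/
noncomputable def r2Num [Fintype V] (G : SimpleGraph V) : ℕ :=
  sInf {k | ∃ f : V → ℕ, IsR2DF G f ∧ (∑ v, f v) = k}

/-- The total domination number of `G`. -/
noncomputable def totalDomNum [Fintype V] (G : SimpleGraph V) : ℕ :=
  sInf {k | ∃ S : Finset V, (∀ v : V, ∃ u ∈ S, G.Adj v u) ∧ S.card = k}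

/-- The domination number of `G`. -/
noncomputable def domNum [Fintype V] (G : SimpleGraph V) : ℕ :=
  sInf {k | ∃ S : Finset V, (∀ v : V, v ∉ S → ∃ u ∈ S, G.Adj v u) ∧ S.card = k}

/-- The double domination number of `G`. -/
noncomputable def doubleDomNum [Fintype V] (G : SimpleGraph V) : ℕ :=
  sInf {k | ∃ S : Finset V,
    (∀ v : V, 2 ≤ (S.filter (fun u => G.Adj v u ∨ u = v)).card) ∧ S.card = k}

lemma IsTRDF.isTR2DF [Fintype V] {G : SimpleGraph V} {f : V → ℕ} (hf : IsTRDF G f) :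
    IsTR2DF G f := by
  refine ⟨hf.1, fun v hv => ?_, hf.2.2⟩
  obtain ⟨u, hu, h2⟩ := hf.2.1 v hv
  rw [← h2]
  exact Finset.single_le_sum (f := f) (fun _ _ => Nat.zero_le _) (by simpa using hu)

/-- A form of Ore's theorem: at most half of the vertices of `A` dominate all vertices of `A` that
are not isolated in the subgraph induced on `A`. Both a maximal independent subset of `A` and its
complement in `A` dominate these vertices. -/
lemma exists_half_dominating (G : SimpleGraph V) (A : Finset V) :
    ∃ D ⊆ A, 2 * D.card ≤ A.card ∧
      ∀ v ∈ A, (∃ u ∈ A, G.Adj v u) → v ∉ D → ∃ u ∈ D, G.Adj v u := by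
  let F := A.powerset.filter (fun I => ∀ x ∈ I, ∀ y ∈ I, ¬ G.Adj x y)
  obtain ⟨I, hI, hmax⟩ := F.exists_max_image Finset.card ⟨∅, by simp [F]⟩
  simp only [F, Finset.mem_filter, Finset.mem_powerset] at hI hmax
  obtain ⟨hIA, hind⟩ := hI
  have hcard := Finset.card_sdiff_add_card_eq_card hIA
  by_cases hc : 2 * I.card ≤ A.card
  · refine ⟨I, hIA, hc, fun v hv _ hvI => ?_⟩
    -- Otherwise `insert v I` would be a larger independent set.
    by_contra! hno
    have := hmax (insert v I) ⟨Finset.insert_subset hv hIA, fun x hx y hy hxy => by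
      rw [Finset.mem_insert] at hx hy
      rcases hx with rfl | hx <;> rcases hy with rfl | hy
      · exact G.irrefl hxy
      · exact hno y hy hxy
      · exact hno x hx hxy.symm
      · exact hind x hx y hy hxy⟩
    rw [Finset.card_insert_of_notMem hvI] at this
    omega
  · refine ⟨A \ I, Finset.sdiff_subset, by omega, fun v hv ⟨u, hu, huv⟩ hvD => ?_⟩
    have hvI : v ∈ I := by simpa [hv] using hvD
    exact ⟨u, by simpa [hu] using fun huI => hind v hvI u huI huv, huv⟩

lemma domNum_le [Fintype V] {G : SimpleGraph V} {S : Finset V}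
    (hS : ∀ v : V, v ∉ S → ∃ u ∈ S, G.Adj v u) : domNum G ≤ S.card :=
  Nat.sInf_le ⟨S, hS, rfl⟩

lemma tR2Num_le [Fintype V] {G : SimpleGraph V} {f : V → ℕ} (hf : IsTR2DF G f) :
    tR2Num G ≤ ∑ v, f v :=
  Nat.sInf_le ⟨f, hf, rfl⟩

lemma tRNum_le [Fintype V] {G : SimpleGraph V} {f : V → ℕ} (hf : IsTRDF G f) :
    tRNum G ≤ ∑ v, f v :=
  Nat.sInf_le ⟨f, hf, rfl⟩

lemma two_mul_domNum_le [Fintype V] {G : SimpleGraph V} {f : V → ℕ} (hf : IsTRDF G f) :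
    2 * domNum G ≤ ∑ v, f v := by
  let V₁ := Finset.univ.filter (fun v => f v = 1)
  let V₂ := Finset.univ.filter (fun v => f v = 2)
  obtain ⟨D, -, hcard, hD⟩ := exists_half_dominating G V₁
  have hsum : ∑ v, f v = V₁.card + 2 * V₂.card := by
    simp only [V₁, V₂, Finset.card_filter, Finset.mul_sum, ← Finset.sum_add_distrib]
    refine Finset.sum_congr rfl fun v _ => ?_
    have := hf.1 v
    interval_cases f v <;> rfl
  have hdom : domNum G ≤ (V₂ ∪ D).card := by
    refine domNum_le fun v hv => ?_
    simp only [Finset.mem_union, not_or] at hv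
    have hle := hf.1 v
    have h2 : f v ≠ 2 := by simpa [V₂] using hv.1
    obtain h0 | h1 : f v = 0 ∨ f v = 1 := by omega
    · obtain ⟨u, hu, hu2⟩ := hf.2.1 v h0
      exact ⟨u, Finset.mem_union_left _ (by simpa [V₂] using hu2), hu⟩
    · obtain ⟨u, hu, hu1⟩ := hf.2.2 v h1.ge
      have hule := hf.1 u
      obtain hu1 | hu2 : f u = 1 ∨ f u = 2 := by omega
      · obtain ⟨w, hw, hvw⟩ := hD v (by simpa [V₁] using h1) ⟨u, by simpa [V₁] using hu1, hu⟩ hv.2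
        exact ⟨w, Finset.mem_union_right _ hw, hvw⟩
      · exact ⟨u, Finset.mem_union_left _ (by simpa [V₂] using hu2), hu⟩
  have := Finset.card_union_le V₂ D
  omega

/-- The sum of the indicators of a total dominating set and a dominating set is a total
Roman {2}-dominating function. -/
lemma tR2Num_le_card_add_card [Fintype V] {G : SimpleGraph V} {T S : Finset V}
    (hT : ∀ v : V, ∃ u ∈ T, G.Adj v u) (hS : ∀ v : V, v ∉ S → ∃ u ∈ S, G.Adj v u) :
    tR2Num G ≤ T.card + S.card := by
  let f : V → ℕ := fun v => (if v ∈ T then 1 else 0) + (if v ∈ S then 1 else 0)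
  have hsum : ∑ v, f v = T.card + S.card := by
    simp [f, Finset.sum_add_distrib]
  rw [← hsum]
  refine tR2Num_le ⟨fun v => ?_, fun v hv => ?_, fun v _ => ?_⟩
  · simp only [f]; split_ifs <;> omega
  · have hvS : v ∉ S := fun hvS => by simp [f, hvS] at hv
    obtain ⟨u, hu, hvu⟩ := hT v
    obtain ⟨w, hw, hvw⟩ := hS v hvS
    -- The two indicators each contribute at least `1`, whether or not `u = w`.
    simp only [f, Finset.sum_add_distrib]
    have h1 := Finset.single_le_sum (s := Finset.univ.filter (fun x => G.Adj v x))
      (f := fun x => if x ∈ T then 1 else 0) (fun _ _ => Nat.zero_le _) (by simpa using hvu)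
    have h2 := Finset.single_le_sum (s := Finset.univ.filter (fun x => G.Adj v x))
      (f := fun x => if x ∈ S then 1 else 0) (fun _ _ => Nat.zero_le _) (by simpa using hvw)
    simp only [hu, hw, if_true] at h1 h2
    omega
  · obtain ⟨u, hu, hvu⟩ := hT v
    exact ⟨u, hvu, by simp [f, hu]⟩

lemma tRNum_le_two_mul_card [Fintype V] {G : SimpleGraph V} {T : Finset V}
    (hT : ∀ v : V, ∃ u ∈ T, G.Adj v u) : tRNum G ≤ 2 * T.card := by
  let f : V → ℕ := fun v => if v ∈ T then 2 else 0
  have hsum : ∑ v, f v = 2 * T.card := by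
    simp [f, Finset.sum_ite_mem, mul_comm]
  rw [← hsum]
  refine tRNum_le ⟨fun v => ?_, fun v _ => ?_, fun v _ => ?_⟩
  · simp only [f]; split_ifs <;> omega
  all_goals
    obtain ⟨u, hu, hvu⟩ := hT v
    exact ⟨u, hvu, by simp [f, hu]⟩

theorem statement_5 {V : Type*} [Fintype V] (G : SimpleGraph V)
    (h : ∀ v : V, ∃ u, G.Adj v u) :
    tR2Num G = 2 * totalDomNum G ↔ (tR2Num G = tRNum G ∧ totalDomNum G = domNum G) := by
  -- The absence of isolated vertices makes the sets defining the parameters nonempty, so each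
  -- infimum is attained.
  obtain ⟨T, hT, hTc⟩ : totalDomNum G ∈
      {k | ∃ S : Finset V, (∀ v : V, ∃ u ∈ S, G.Adj v u) ∧ S.card = k} :=
    Nat.sInf_mem ⟨_, Finset.univ, fun v => by simpa using h v, rfl⟩
  obtain ⟨S, hS, hSc⟩ : domNum G ∈
      {k | ∃ S : Finset V, (∀ v : V, v ∉ S → ∃ u ∈ S, G.Adj v u) ∧ S.card = k} :=
    Nat.sInf_mem ⟨_, Finset.univ, fun v hv => absurd (Finset.mem_univ v) hv, rfl⟩
  obtain ⟨f, hf, hfs⟩ : tRNum G ∈ {k | ∃ f : V → ℕ, IsTRDF G f ∧ (∑ v, f v) = k} :=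
    Nat.sInf_mem ⟨_, fun _ => 1, ⟨fun _ => by simp, fun _ h0 => by simp at h0,
      fun v _ => by simpa using h v⟩, rfl⟩
  have h1 := tR2Num_le hf.isTR2DF
  have h2 := two_mul_domNum_le hf
  have h3 := tR2Num_le_card_add_card hT hS
  have h4 := tRNum_le_two_mul_card hT
  have h5 : domNum G ≤ T.card := domNum_le fun v _ => hT v
  omega
end

section
/- For every finite simple graph G without isolated vertices and with maximum degree Δ(G) ≤ 2, the total Roman {2}-domination number equals the double domination number: γ_{t{R2}}(G) = γ_{×2}(G). -/
/-!
A double dominating set `S` gives a total Roman {2}-dominating function of the same weight, its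
indicator function. Conversely, let `f` be a total Roman {2}-dominating function. Every vertex of
value `2` has a neighbour of positive value, so since degrees are at most `2` it has at most one
neighbour of value `0`. Add to the support of `f` all vertices of value `0` that have a
neighbour of value `2`. The number of added vertices is at most the number of vertices of value
`2`, so the resulting set has at most `∑ v, f v` elements; it is double dominating.
-/

open Finset
open scoped Classical

variable {V : Type*}

lemma isTR2DF_indicator {V : Type*} [Fintype V] (G : SimpleGraph V) (S : Finset V)
    (hS : ∀ v : V, 2 ≤ (S.filter (fun u => G.Adj v u ∨ u = v)).card) :
    IsTR2DF G (fun v => if v ∈ S then 1 else 0) := by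
  refine ⟨fun v => by dsimp only; split_ifs <;> omega, fun v hv => ?_, fun v hv => ?_⟩
  · have hvS : v ∉ S := by by_contra hc; simp [hc] at hv
    refine (hS v).trans ?_
    rw [← Finset.sum_filter, Finset.sum_const, smul_eq_mul, mul_one]
    refine Finset.card_le_card fun u hu => ?_
    simp only [Finset.mem_filter, Finset.mem_univ, true_and] at hu ⊢
    rcases hu with ⟨h1, h2 | rfl⟩
    · exact ⟨h2, h1⟩
    · exact absurd h1 hvS
  · obtain ⟨u, hu, hne⟩ := Finset.exists_mem_ne (lt_of_lt_of_le one_lt_two (hS v)) v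
    simp only [Finset.mem_filter] at hu
    exact ⟨u, hu.2.resolve_right hne, by simp [hu.1]⟩

/-- A vertex of degree at most `2` with a neighbour of nonzero value has at most one neighbour of
value zero. -/
lemma eq_of_zero_neighbors {V : Type*} [Fintype V] (G : SimpleGraph V) (f : V → ℕ) (w x u v : V)
    (hw : G.degree w ≤ 2) (hx : G.Adj w x) (hfx : 1 ≤ f x)
    (hu : G.Adj w u) (hfu : f u = 0) (hv : G.Adj w v) (hfv : f v = 0) : u = v := by
  by_contra hne
  have hxu : x ≠ u := by rintro rfl; omega
  have hxv : x ≠ v := by rintro rfl; omega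
  have hsub : ({x, u, v} : Finset V) ⊆ G.neighborFinset w := by
    intro y hy
    simp only [Finset.mem_insert, Finset.mem_singleton] at hy
    rcases hy with rfl | rfl | rfl <;> simpa
  have hcard := Finset.card_le_card hsub
  rw [Finset.card_eq_three.mpr ⟨x, u, v, hxu, hxv, hne, rfl⟩, G.card_neighborFinset_eq_degree]
    at hcard
  omega

lemma exists_doubleDom_card_le {V : Type*} [Fintype V] (G : SimpleGraph V)
    (hΔ : ∀ v : V, G.degree v ≤ 2) (f : V → ℕ) (hf : IsTR2DF G f) :
    ∃ S : Finset V, (∀ v : V, 2 ≤ (S.filter (fun u => G.Adj v u ∨ u = v)).card) ∧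
      S.card ≤ ∑ v, f v := by
  obtain ⟨hf2, hf0, hf1⟩ := hf
  let P : Finset V := Finset.univ.filter fun v => 1 ≤ f v
  let Z : Finset V := Finset.univ.filter fun v => f v = 0 ∧ ∃ w, G.Adj v w ∧ f w = 2
  let T : Finset V := Finset.univ.filter fun v => f v = 2
  have hpair : ∀ v u, v ∈ P ∪ Z → u ∈ P ∪ Z → G.Adj v u →
      2 ≤ ((P ∪ Z).filter (fun u => G.Adj v u ∨ u = v)).card := by
    intro v u hv hu hvu
    rw [← Finset.card_pair hvu.ne]
    refine Finset.card_le_card fun y hy => ?_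
    simp only [Finset.mem_insert, Finset.mem_singleton] at hy
    rcases hy with rfl | rfl
    · exact Finset.mem_filter.mpr ⟨hv, Or.inr rfl⟩
    · exact Finset.mem_filter.mpr ⟨hu, Or.inl hvu⟩
  have hP : ∀ v, 1 ≤ f v → v ∈ P ∪ Z := fun v hv =>
    Finset.mem_union_left _ (by simpa [P] using hv)
  refine ⟨P ∪ Z, fun v => ?_, ?_⟩
  · rcases Nat.eq_zero_or_pos (f v) with hv | hv
    · by_cases hw : ∃ w, G.Adj v w ∧ f w = 2
      · have hvZ : v ∈ P ∪ Z := Finset.mem_union_right _ (by simpa [Z] using ⟨hv, hw⟩)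
        obtain ⟨w, hvw, hfw⟩ := hw
        exact hpair v w hvZ (hP w (by omega)) hvw
      · -- All neighbours have value at most `1`, so at least two of them are in the support.
        push Not at hw
        refine (hf0 v hv).trans ?_
        calc ∑ u ∈ Finset.univ.filter (fun u => G.Adj v u), f u
            ≤ ∑ u ∈ Finset.univ.filter (fun u => G.Adj v u), if 1 ≤ f u then 1 else 0 := by
              refine Finset.sum_le_sum fun u hu => ?_
              have h1 := hw u (by simpa using hu)
              have h2 := hf2 u
              split_ifs <;> omega
          _ = ((Finset.univ.filter (fun u => G.Adj v u)).filter (fun u => 1 ≤ f u)).card := by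
              rw [Finset.card_filter]
          _ ≤ _ := by
              refine Finset.card_le_card fun u hu => ?_
              simp only [Finset.mem_filter, Finset.mem_univ, true_and] at hu
              exact Finset.mem_filter.mpr ⟨hP u hu.2, Or.inl hu.1⟩
    · obtain ⟨u, hvu, hu⟩ := hf1 v hv
      exact hpair v u (hP v hv) (hP u hu) hvu
  · have hZT : Z.card ≤ T.card := by
      have hex : ∀ v : V, ∃ w, v ∈ Z → G.Adj v w ∧ f w = 2 := fun v => by
        by_cases hv : v ∈ Z
        · obtain ⟨w, hw⟩ := (Finset.mem_filter.mp hv).2.2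
          exact ⟨w, fun _ => hw⟩
        · exact ⟨v, fun hc => absurd hc hv⟩
      choose g hg using hex
      refine Finset.card_le_card_of_injOn g (fun v hv => ?_) (fun u hu v hv huv => ?_)
      · simpa [T] using (hg v hv).2
      · obtain ⟨x, hx, hfx⟩ := hf1 (g u) (by rw [(hg u hu).2]; omega)
        exact eq_of_zero_neighbors G f (g u) x u v (hΔ _) hx hfx (hg u hu).1.symm
          (Finset.mem_filter.mp hu).2.1 (huv ▸ (hg v hv).1.symm) (Finset.mem_filter.mp hv).2.1
    have hsum : ∑ v, f v = P.card + T.card := by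
      simp only [P, T, Finset.card_filter, ← Finset.sum_add_distrib]
      refine Finset.sum_congr rfl fun v _ => ?_
      have := hf2 v
      split_ifs <;> omega
    have := Finset.card_union_le P Z
    omega

theorem statement_9 {V : Type*} [Fintype V] (G : SimpleGraph V)
    (h : ∀ v : V, ∃ u, G.Adj v u) (hΔ : ∀ v : V, G.degree v ≤ 2) :
    tR2Num G = doubleDomNum G := by
  -- Both infima are over nonempty sets: without isolated vertices, `univ` is double dominating.
  have hD : {k | ∃ S : Finset V,
      (∀ v : V, 2 ≤ (S.filter (fun u => G.Adj v u ∨ u = v)).card) ∧ S.card = k}.Nonempty := by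
    refine ⟨_, Finset.univ, fun v => ?_, rfl⟩
    obtain ⟨u, hu⟩ := h v
    rw [← Finset.card_pair hu.ne]
    refine Finset.card_le_card fun y hy => ?_
    simp only [Finset.mem_insert, Finset.mem_singleton] at hy
    rcases hy with rfl | rfl <;> simp [hu]
  have key : ∀ S : Finset V,
      (∀ v : V, 2 ≤ (S.filter (fun u => G.Adj v u ∨ u = v)).card) →
      S.card ∈ {k | ∃ f : V → ℕ, IsTR2DF G f ∧ (∑ v, f v) = k} := fun S hS =>
    ⟨_, isTR2DF_indicator G S hS, by simp⟩
  apply le_antisymm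
  · obtain ⟨S, hS, hc⟩ := Nat.sInf_mem hD
    rw [doubleDomNum, ← hc]
    exact Nat.sInf_le (key S hS)
  · obtain ⟨_, S₀, hS₀, -⟩ := hD
    obtain ⟨f, hf, hw⟩ := Nat.sInf_mem ⟨_, key S₀ hS₀⟩
    obtain ⟨S, hS, hle⟩ := exists_doubleDom_card_le G hΔ f hf
    rw [tR2Num, ← hw]
    refine le_trans ?_ hle
    exact Nat.sInf_le ⟨S, hS, rfl⟩
end

section
/- For the cycle graph C_n on n ≥ 3 vertices, the total Roman {2}-domination number is γ_{t{R2}}(C_n) = ⌈2n/3⌉. -/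
/-!
Lower bound: for a TR2DF `f` on a cycle, every closed neighbourhood has weight
`f (v - 1) + f v + f (v + 1) ≥ 2`: if `f v = 0` this is the domination condition, and if `f v ≥ 1`
then some neighbour also has value at least `1`. Summing over all `v` counts each vertex three
times, so `2 n ≤ 3 w(f)`, i.e. `w(f) ≥ ⌈2n/3⌉` (`weight_lower_bound`).

Upper bound: the periodic labelling `1, 1, 0, 1, 1, 0, …` cut off after `n` entries is a TR2DF
(`pattern_isTR2DF`) of weight exactly `⌈2n/3⌉` (`pattern_weight`).
-/

open Finset
open scoped Classical

variable {V : Type*}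

/-- On a cycle the neighbours of `v` are the two distinct vertices `v - 1` and `v + 1`, which turns
the TR2DF conditions into pointwise conditions on three consecutive values. -/
lemma isTR2DF_cycle_iff (m : ℕ) (f : Fin (m + 3) → ℕ) :
    IsTR2DF (SimpleGraph.cycleGraph (m + 3)) f ↔
      (∀ v, f v ≤ 2) ∧ (∀ v, f v = 0 → 2 ≤ f (v - 1) + f (v + 1)) ∧
      (∀ v, 1 ≤ f v → 1 ≤ f (v - 1) ∨ 1 ≤ f (v + 1)) := by
  have hadj : ∀ v u : Fin (m + 3),
      (SimpleGraph.cycleGraph (m + 3)).Adj v u ↔ u = v - 1 ∨ u = v + 1 := by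
    intro v u
    rw [← SimpleGraph.mem_neighborSet, SimpleGraph.cycleGraph_neighborSet]
    simp
  have hne : ∀ v : Fin (m + 3), v - 1 ≠ v + 1 := by
    intro v h
    have hval := congrArg Fin.val h
    rw [Fin.coe_sub_one, Fin.val_add_one] at hval
    have hv := v.isLt
    simp only [Fin.ext_iff, Fin.val_zero, Fin.val_last] at hval
    split_ifs at hval <;> omega
  -- Any decidability instance is allowed, as the definition of `IsTR2DF` carries the classical one.
  have hsum : ∀ (v : Fin (m + 3))
      [DecidablePred fun u => (SimpleGraph.cycleGraph (m + 3)).Adj v u],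
      ∑ u ∈ Finset.univ.filter (fun u => (SimpleGraph.cycleGraph (m + 3)).Adj v u), f u
        = f (v - 1) + f (v + 1) := by
    intro v _
    rw [← Finset.sum_pair (hne v)]
    congr 1
    ext u
    simp [hadj]
  unfold IsTR2DF
  simp only [hsum]
  simp only [hadj, or_and_right, exists_or, exists_eq_left]

lemma weight_lower_bound (m : ℕ) (f : Fin (m + 3) → ℕ)
    (hf : IsTR2DF (SimpleGraph.cycleGraph (m + 3)) f) : 2 * (m + 3) ≤ 3 * ∑ v, f v := by
  obtain ⟨-, h0, h1⟩ := (isTR2DF_cycle_iff m f).1 hf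
  have hclosed : ∀ v, 2 ≤ f (v - 1) + f v + f (v + 1) := by
    intro v
    have := h0 v
    have := h1 v
    omega
  have hS : ∑ _v : Fin (m + 3), 2 ≤ ∑ v, (f (v - 1) + f v + f (v + 1)) :=
    Finset.sum_le_sum fun v _ => hclosed v
  have hl : ∑ v, f (v - 1) = ∑ v, f v := Equiv.sum_comp (Equiv.subRight (1 : Fin (m + 3))) f
  have hr : ∑ v, f (v + 1) = ∑ v, f v := Equiv.sum_comp (Equiv.addRight (1 : Fin (m + 3))) f
  rw [Finset.sum_add_distrib, Finset.sum_add_distrib, hl, hr] at hS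
  simp only [Finset.sum_const, Finset.card_univ, Fintype.card_fin, smul_eq_mul] at hS
  omega

/-- The 3-periodic labelling `1, 1, 0, 1, 1, 0, …`. -/
def pattern (i : ℕ) : ℕ := if i % 3 = 2 then 0 else 1

lemma pattern_weight (n : ℕ) : ∑ i ∈ Finset.range n, pattern i = (2 * n + 2) / 3 := by
  induction n with
  | zero => simp
  | succ k ih =>
    rw [Finset.sum_range_succ, ih, pattern]
    obtain ⟨q, hq | hq | hq⟩ : ∃ q, k = 3 * q ∨ k = 3 * q + 1 ∨ k = 3 * q + 2 :=
      ⟨k / 3, by omega⟩ <;> split_ifs <;> omega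

lemma pattern_isTR2DF (m : ℕ) :
    IsTR2DF (SimpleGraph.cycleGraph (m + 3)) (fun v => pattern v.val) := by
  rw [isTR2DF_cycle_iff]
  have hp : ∀ i, i % 3 = 2 ∧ pattern i = 0 ∨ i % 3 ≠ 2 ∧ pattern i = 1 := by
    intro i
    unfold pattern
    split_ifs with h <;> simp [h]
  simp only [Fin.coe_sub_one, Fin.val_add_one, Fin.ext_iff, Fin.val_zero, Fin.val_last]
  refine ⟨fun v => ?_, fun v h => ?_, fun v h => ?_⟩
  · have := hp v
    omega
  all_goals
    have hv := v.isLt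
    have := hp v
    have := hp (v - 1)
    have := hp (v + 1)
    have := hp 0
    have := hp (m + 2)
    -- The wrap-around edge between `m + 2` and `0` is separated from the interior case.
    split_ifs with hz hl hl
    · omega
    · simp only [hz] at *
      omega
    · simp only [hl] at *
      omega
    · omega

theorem statement_11 (n : ℕ) (hn : 3 ≤ n) :
    tR2Num (SimpleGraph.cycleGraph n) = (2 * n + 2) / 3 := by
  obtain ⟨m, rfl⟩ : ∃ m, n = m + 3 := ⟨n - 3, by omega⟩
  have hmem : (2 * (m + 3) + 2) / 3 ∈ {k | ∃ f : Fin (m + 3) → ℕ,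
      IsTR2DF (SimpleGraph.cycleGraph (m + 3)) f ∧ (∑ v, f v) = k} :=
    ⟨fun v => pattern v.val, pattern_isTR2DF m,
      (Fin.sum_univ_eq_sum_range pattern (m + 3)).trans (pattern_weight _)⟩
  refine le_antisymm (Nat.sInf_le hmem) (le_csInf ⟨_, hmem⟩ ?_)
  rintro k ⟨f, hf, rfl⟩
  have := weight_lower_bound m f hf
  omega
end

section
/- Let G be a finite simple graph of order n. If G has a Hamiltonian cycle, then γ_{t{R2}}(G) ≤ 2⌈n/3⌉. If G has a Hamiltonian path, then γ_{t{R2}}(G) ≤ 2⌈n/3⌉ + 1. Here γ_{t{R2}}(G) is the total Roman {2}-domination number of G. -/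
/-!
Number the vertices `0, …, n - 1` along the Hamiltonian cycle or path, and give weight `1` to the
vertices of a set `S` and `0` to the others. This is a total Roman {2}-dominating function as soon
as every vertex outside `S` has two neighbours in `S` and every vertex of `S` has one
(`tR2Num_le_card`).

On a cycle, take the periodic pattern `1 1 0 1 1 0 …`, that is `S = {i | i % 3 ≠ 2}`: the zeros lie
between two ones, and the edge from `n - 1` to `0` repairs the end of the pattern. It has
`n - ⌊n/3⌋ ≤ 2⌈n/3⌉` ones. On a path with `n ≥ 2` vertices that edge is missing, so the last two
vertices are put into `S` as well; the count is then at most `2⌈n/3⌉ + 1`. The one-vertex path has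
no total Roman {2}-dominating function at all, so its `tR2Num` is `sInf ∅ = 0`.
-/

open Finset
open scoped Classical

variable {V : Type*}

/-- The indicator function of a set that dominates its complement twice and itself once is a total
Roman {2}-dominating function. -/
lemma tR2Num_le_card {V : Type*} [Fintype V] (G : SimpleGraph V) (S : Finset V)
    (h0 : ∀ v, v ∉ S → ∃ u ∈ S, ∃ w ∈ S, u ≠ w ∧ G.Adj v u ∧ G.Adj v w)
    (h1 : ∀ v ∈ S, ∃ u ∈ S, G.Adj v u) : tR2Num G ≤ S.card := by
  refine Nat.sInf_le ⟨fun v => if v ∈ S then 1 else 0, ⟨?_, ?_, ?_⟩, ?_⟩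
  · intro v
    dsimp only
    split_ifs <;> omega
  · intro v hv
    have hvS : v ∉ S := by
      intro h
      simp [h] at hv
    obtain ⟨u, hu, w, hw, huw, hvu, hvw⟩ := h0 v hvS
    calc 2 = ∑ x ∈ ({u, w} : Finset V), (if x ∈ S then 1 else 0) := by
          rw [Finset.sum_pair huw, if_pos hu, if_pos hw]
      _ ≤ _ := by
          apply Finset.sum_le_sum_of_subset
          intro x hx
          simp only [Finset.mem_insert, Finset.mem_singleton] at hx
          rcases hx with rfl | rfl <;> simp [hvu, hvw]
  · intro v hv
    have hvS : v ∈ S := by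
      by_contra h
      simp [h] at hv
    obtain ⟨u, hu, hvu⟩ := h1 v hvS
    exact ⟨u, hvu, by simp [hu]⟩
  · simp

/-- `tR2Num_le_card` for a set given by a predicate `c` on the indices of an enumeration
`g 0, …, g (n - 1)` of the vertices. -/
lemma tR2Num_le_of_enum {V : Type*} [Fintype V] (G : SimpleGraph V) (n : ℕ) (g : ℕ → V)
    (hinj : ∀ i < n, ∀ j < n, g i = g j → i = j) (hsurj : ∀ v, ∃ i < n, g i = v)
    (c : ℕ → Prop) [DecidablePred c]
    (h0 : ∀ i < n, ¬ c i → ∃ j < n, ∃ k < n, j ≠ k ∧ c j ∧ c k ∧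
      G.Adj (g i) (g j) ∧ G.Adj (g i) (g k))
    (h1 : ∀ i < n, c i → ∃ j < n, c j ∧ G.Adj (g i) (g j)) :
    tR2Num G ≤ ((Finset.range n).filter c).card := by
  have hmem : ∀ i < n, c i → g i ∈ ((Finset.range n).filter c).image g := fun i hi hc =>
    Finset.mem_image_of_mem _ (by simp [hi, hc])
  refine (tR2Num_le_card G (((Finset.range n).filter c).image g) ?_ ?_).trans
    Finset.card_image_le
  · intro v hv
    obtain ⟨i, hi, rfl⟩ := hsurj v
    obtain ⟨j, hj, k, hk, hjk, cj, ck, aj, ak⟩ := h0 i hi (fun h => hv (hmem i hi h))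
    exact ⟨g j, hmem j hj cj, g k, hmem k hk ck, fun h => hjk (hinj j hj k hk h), aj, ak⟩
  · intro v hv
    simp only [Finset.mem_image, Finset.mem_filter, Finset.mem_range] at hv
    obtain ⟨i, ⟨hi, ci⟩, rfl⟩ := hv
    obtain ⟨j, hj, cj, aj⟩ := h1 i hi ci
    exact ⟨g j, hmem j hj cj, aj⟩

lemma card_filter_mod_three (n : ℕ) :
    ((Finset.range n).filter (fun i => i % 3 ≠ 2)).card + n / 3 = n := by
  induction n with
  | zero => simp
  | succ n ih =>
    rw [Finset.range_add_one, Finset.filter_insert]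
    split_ifs with h
    · rw [Finset.card_insert_of_notMem (by simp)]
      omega
    · omega

lemma tR2Num_le_of_cycle_enum {V : Type*} [Fintype V] (G : SimpleGraph V) (n : ℕ) (hn : 3 ≤ n)
    (g : ℕ → V) (hinj : ∀ i < n, ∀ j < n, g i = g j → i = j) (hsurj : ∀ v, ∃ i < n, g i = v)
    (hadj : ∀ i, i + 1 < n → G.Adj (g i) (g (i + 1))) (hclose : G.Adj (g (n - 1)) (g 0)) :
    tR2Num G ≤ 2 * ((n + 2) / 3) := by
  have key := tR2Num_le_of_enum G n g hinj hsurj (fun i => i % 3 ≠ 2) ?_ ?_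
  · have := card_filter_mod_three n
    omega
  · intro i hi hc
    obtain ⟨m, rfl⟩ : ∃ m, i = m + 1 := ⟨i - 1, by omega⟩
    rcases Nat.lt_or_ge (m + 1 + 1) n with h | h
    · exact ⟨m, by omega, m + 1 + 1, h, by omega, by omega, by omega,
        (hadj m hi).symm, hadj (m + 1) h⟩
    · obtain rfl : n = m + 1 + 1 := by omega
      exact ⟨m, by omega, 0, by omega, by omega, by omega, by omega,
        (hadj m hi).symm, hclose⟩
  · intro i hi hc
    by_cases h : i % 3 = 1
    · obtain ⟨m, rfl⟩ : ∃ m, i = m + 1 := ⟨i - 1, by omega⟩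
      exact ⟨m, by omega, by omega, (hadj m hi).symm⟩
    · rcases Nat.lt_or_ge (i + 1) n with h' | h'
      · exact ⟨i + 1, h', by omega, hadj i h'⟩
      · obtain rfl : n = i + 1 := by omega
        exact ⟨0, by omega, by omega, hclose⟩

lemma tR2Num_le_of_path_enum {V : Type*} [Fintype V] (G : SimpleGraph V) (n : ℕ) (hn : 2 ≤ n)
    (g : ℕ → V) (hinj : ∀ i < n, ∀ j < n, g i = g j → i = j) (hsurj : ∀ v, ∃ i < n, g i = v)
    (hadj : ∀ i, i + 1 < n → G.Adj (g i) (g (i + 1))) :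
    tR2Num G ≤ 2 * ((n + 2) / 3) + 1 := by
  have key := tR2Num_le_of_enum G n g hinj hsurj (fun i => i % 3 ≠ 2 ∨ n ≤ i + 2) ?_ ?_
  · obtain ⟨m, rfl⟩ : ∃ m, n = m + 2 := ⟨n - 2, by omega⟩
    have hsub : (Finset.range (m + 2)).filter (fun i => i % 3 ≠ 2 ∨ m + 2 ≤ i + 2) ⊆
        (Finset.range m).filter (fun i => i % 3 ≠ 2) ∪ {m, m + 1} := by
      intro i
      simp only [Finset.mem_filter, Finset.mem_range, Finset.mem_union, Finset.mem_insert,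
        Finset.mem_singleton]
      omega
    have h1 := (Finset.card_le_card hsub).trans (Finset.card_union_le _ _)
    have h2 : ({m, m + 1} : Finset ℕ).card ≤ 2 := Finset.card_le_two
    have h3 := card_filter_mod_three m
    omega
  · intro i hi hc
    obtain ⟨m, rfl⟩ : ∃ m, i = m + 1 := ⟨i - 1, by omega⟩
    exact ⟨m, by omega, m + 1 + 1, by omega, by omega, by omega, by omega,
      (hadj m hi).symm, hadj (m + 1) (by omega)⟩
  · intro i hi hc
    by_cases h : i % 3 = 1 ∨ i + 1 = n
    · obtain ⟨m, rfl⟩ : ∃ m, i = m + 1 := ⟨i - 1, by omega⟩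
      exact ⟨m, by omega, by omega, (hadj m hi).symm⟩
    · exact ⟨i + 1, by omega, by omega, hadj i (by omega)⟩

/-- The vertices of a Hamiltonian path, in order, enumerate the vertex set. -/
lemma isHamiltonian_enum {V : Type*} [Fintype V] {G : SimpleGraph V} {a b : V} {p : G.Walk a b}
    (hp : p.IsHamiltonian) :
    p.length + 1 = Fintype.card V ∧
    (∀ i < Fintype.card V, ∀ j < Fintype.card V, p.getVert i = p.getVert j → i = j) ∧
    (∀ v, ∃ i < Fintype.card V, p.getVert i = v) ∧
    (∀ i, i + 1 < Fintype.card V → G.Adj (p.getVert i) (p.getVert (i + 1))) := by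
  have hlen : p.length + 1 = Fintype.card V := by
    rw [← hp.length_support, SimpleGraph.Walk.length_support]
  refine ⟨hlen, ?_, ?_, ?_⟩
  · intro i hi j hj h
    exact hp.isPath.getVert_injOn (by rw [Set.mem_ofPred_eq]; omega)
      (by rw [Set.mem_ofPred_eq]; omega) h
  · intro v
    obtain ⟨i, hi, hil⟩ := SimpleGraph.Walk.mem_support_iff_exists_getVert.mp (hp.mem_support v)
    exact ⟨i, by omega, hi⟩
  · intro i hi
    exact p.adj_getVert_succ (by omega)

theorem statement_15 {V : Type*} [Fintype V] (G : SimpleGraph V) :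
    ((∃ (a : V) (p : G.Walk a a), p.IsHamiltonianCycle) →
      tR2Num G ≤ 2 * ((Fintype.card V + 2) / 3)) ∧
    ((∃ (a b : V) (p : G.Walk a b), p.IsHamiltonian) →
      tR2Num G ≤ 2 * ((Fintype.card V + 2) / 3) + 1) := by
  constructor
  · rintro ⟨a, p, hp⟩
    -- The tail of the cycle is a Hamiltonian path from `p.snd` to `a`; the first edge closes it up.
    obtain ⟨hlen, hinj, hsurj, hadj⟩ := isHamiltonian_enum hp.isHamiltonian_tail
    refine tR2Num_le_of_cycle_enum G _ ?_ p.tail.getVert hinj hsurj hadj ?_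
    · rw [← hp.length_eq]
      exact hp.isCycle.three_le_length
    · rw [← hlen, Nat.add_sub_cancel, SimpleGraph.Walk.getVert_length,
        SimpleGraph.Walk.getVert_zero]
      exact p.adj_snd hp.isCycle.not_nil
  · rintro ⟨a, b, p, hp⟩
    obtain ⟨hlen, hinj, hsurj, hadj⟩ := isHamiltonian_enum hp
    rcases Nat.lt_or_ge (Fintype.card V) 2 with h | h
    · -- With a single vertex there are no edges, so no admissible function exists.
      have hsub : Subsingleton V := Fintype.card_le_one_iff_subsingleton.mp (by omega)
      have hempty : {k | ∃ f : V → ℕ, IsTR2DF G f ∧ (∑ v, f v) = k} = ∅ := by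
        rw [Set.eq_empty_iff_forall_notMem]
        rintro k ⟨f, ⟨-, hf0, hf1⟩, -⟩
        have hno : ∀ u, ¬ G.Adj a u := fun u hu => hu.ne (Subsingleton.elim _ _)
        rcases Nat.eq_zero_or_pos (f a) with h0 | h0
        · have := hf0 a h0
          simp [hno] at this
        · obtain ⟨u, hu, -⟩ := hf1 a h0
          exact hno u hu
      rw [tR2Num, hempty, Nat.sInf_empty]
      exact Nat.zero_le _
    · exact tR2Num_le_of_path_enum G _ h p.getVert hinj hsurj hadj
end
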